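/- Let n ≥ 4, n − ⌊n/3⌋ ≤ r ≤ n−1, and let S be a subsemigroup of IORD(n,r). Then S is a maximal subsemigroup of IORD(n,r) if and only if S = IORD(n,r) \ {α} for some α ∈ EI_r ∪ FI_r ∪ GI_r ∪ (∪_{k=2}^{r−1} GI_k^c) ∪ G_n. -/

import Mathlib

/-!
Partial transformations on the chain X_n = {1 < 2 < ... < n}, encoded as
functions `ℕ → Option ℕ` (with `none` meaning "undefined"), composed
left-to-right: `x(αβ) = (xα)β`.
-/

namespace OrientedPT

noncomputable section
open scoped Classical

/-- A partial transformation, as a partial map on `ℕ`. -/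
def PTrans : Type := ℕ → Option ℕ

instance : Mul PTrans := ⟨fun f g x => (f x).bind g⟩

theorem mul_apply (f g : PTrans) (x : ℕ) : (f * g) x = (f x).bind g := rfl

instance : Semigroup PTrans where
  mul_assoc f g h := by
    funext x
    show ((f x).bind g).bind h = (f x).bind (fun y => (g y).bind h)
    cases f x <;> rfl

/-- The domain of a partial transformation. -/
def domSet (f : PTrans) : Set ℕ := {x | f x ≠ none}

/-- The image of a partial transformation. -/
def im (f : PTrans) : Set ℕ := {y | ∃ x, f x = some y}

/-- The set of fixed points: `fix(α) = {x ∈ dom α : xα = x}`. -/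
def fixSet (f : PTrans) : Set ℕ := {x | f x = some x}

/-- The value of `f` at `x` (defaulting to `0` off the domain). -/
def val (f : PTrans) (x : ℕ) : ℕ := (f x).getD 0

/-- `f` is a partial transformation on `X_n = {1,…,n}`. -/
def IsPT (n : ℕ) (f : PTrans) : Prop :=
  domSet f ⊆ Set.Icc 1 n ∧ im f ⊆ Set.Icc 1 n

/-- Order-decreasing: `xα ≤ x` for all `x ∈ dom α`. -/
def OrderDecr (f : PTrans) : Prop := ∀ x y, f x = some y → y ≤ x

/-- Order-preserving. -/
def OrderPres (f : PTrans) : Prop :=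
  ∀ x y u v, f x = some u → f y = some v → x ≤ y → u ≤ v

/-- Order-reversing. -/
def OrderRev (f : PTrans) : Prop :=
  ∀ x y u v, f x = some u → f y = some v → x ≤ y → v ≤ u

/-- Monotone: order-preserving or order-reversing. -/
def IsMonotone (f : PTrans) : Prop := OrderPres f ∨ OrderRev f

/-- Injectivity of a partial transformation. -/
def Inj (f : PTrans) : Prop := ∀ x y z, f x = some z → f y = some z → x = y

/-- The cyclic successor of `a` in the set `D`: the least element of `D`
above `a` if there is one, and otherwise the least element of `D`. -/
def cycSucc (D : Set ℕ) (a : ℕ) : ℕ :=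
  if {x ∈ D | a < x}.Nonempty then sInf {x ∈ D | a < x} else sInf D

/-- The cyclic descents of `f`: those `a ∈ dom f` whose cyclic successor in
`dom f` has a strictly smaller value. Writing `dom f = {x₁ < ⋯ < x_t}` these
are exactly the indices `1 ≤ i ≤ t` with `x_{i+1}α < x_iα` (where `x_{t+1} = x₁`). -/
def descents (f : PTrans) : Set ℕ :=
  {a ∈ domSet f | val f (cycSucc (domSet f) a) < val f a}

/-- The cyclic ascents of `f`. -/
def ascents (f : PTrans) : Set ℕ :=
  {a ∈ domSet f | val f a < val f (cycSucc (domSet f) a)}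

/-- Orientation-preserving: at most one cyclic descent. -/
def OrientPres (f : PTrans) : Prop := (descents f).ncard ≤ 1

/-- Orientation-reversing: at most one cyclic ascent. -/
def OrientRev (f : PTrans) : Prop := (ascents f).ncard ≤ 1

/-- Oriented: orientation-preserving or orientation-reversing. -/
def Oriented (f : PTrans) : Prop := OrientPres f ∨ OrientRev f

/-- `PORD n`: all oriented and order-decreasing partial transformations on `X_n`. -/
def PORD (n : ℕ) : Set PTrans := {f | IsPT n f ∧ Oriented f ∧ OrderDecr f}

/-- `PORD(n,r) = {α ∈ PORD_n : |im α| ≤ r}`. -/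
def PORDr (n r : ℕ) : Set PTrans := {f ∈ PORD n | (im f).ncard ≤ r}

/-- `POPD n`: the orientation-preserving elements of `PORD n`. -/
def POPD (n : ℕ) : Set PTrans := {f ∈ PORD n | OrientPres f}

/-- `PORD_n^* = PORD_n \ POPD_n`. -/
def PORDstar (n : ℕ) : Set PTrans := PORD n \ POPD n

/-- `PMD n`: monotone and order-decreasing partial transformations on `X_n`. -/
def PMD (n : ℕ) : Set PTrans := {f | IsPT n f ∧ IsMonotone f ∧ OrderDecr f}

/-- `PRD_n^* = PORD_n^* \ PMD_n`. -/
def PRDstar (n : ℕ) : Set PTrans := PORDstar n \ PMD n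

/-- `IORD n`: the injective elements of `PORD n`. -/
def IORD (n : ℕ) : Set PTrans := {f ∈ PORD n | Inj f}

/-- `IORD(n,r) = {α ∈ IORD_n : |im α| ≤ r}`. -/
def IORDr (n r : ℕ) : Set PTrans := {f ∈ IORD n | (im f).ncard ≤ r}

/-- `A` is a generating set of `S`: `A ⊆ S` and the smallest subsemigroup
containing `A` is `S`. -/
def IsGenSet (S A : Set PTrans) : Prop :=
  A ⊆ S ∧ (Subsemigroup.closure A : Set PTrans) = S

/-- A minimal generating set: a generating set of minimum cardinality. -/
def IsMinGenSet (S A : Set PTrans) : Prop :=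
  IsGenSet S A ∧ ∀ B : Set PTrans, IsGenSet S B → A.ncard ≤ B.ncard

/-- The rank of `S`: the minimum cardinality of a generating set of `S`. -/
def rank (S : Set PTrans) : ℕ :=
  sInf {k | ∃ A : Set PTrans, IsGenSet S A ∧ A.ncard = k}

/-- `z` is undecomposable in `S`: `z = xy` with `x, y ∈ S` forces `z = x` or `z = y`. -/
def Undecomposable (S : Set PTrans) (z : PTrans) : Prop :=
  ∀ x ∈ S, ∀ y ∈ S, z = x * y → z = x ∨ z = y

/-- `T` is a subsemigroup of (the semigroup given by the subset) `S`. -/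
def IsSubsemigroupOf (T S : Set PTrans) : Prop :=
  T ⊆ S ∧ ∀ a ∈ T, ∀ b ∈ T, a * b ∈ T

/-- `T` is a maximal subsemigroup of `S`: a maximal element, under inclusion,
of the family of proper subsemigroups of `S`. -/
def IsMaximalSubsemigroup (S T : Set PTrans) : Prop :=
  IsSubsemigroupOf T S ∧ T ≠ S ∧
    ∀ U : Set PTrans, IsSubsemigroupOf U S → U ≠ S → T ⊆ U → T = U

/-- The restriction of `f` to `Y`. -/
def restrict (f : PTrans) (Y : Set ℕ) : PTrans :=
  fun x => if x ∈ Y then f x else none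

/-- The partial identity `1_Y` on `Y`. -/
def partialId (Y : Set ℕ) : PTrans := fun x => if x ∈ Y then some x else none

/-- `ξ_{p,q}`: domain `[p, q+1]`, fixes every point of `[p,q]`, maps `q+1` to `p`. -/
def xi (p q : ℕ) : PTrans := fun x =>
  if p ≤ x ∧ x ≤ q then some x else if x = q + 1 then some p else none

/-- `γ_{p,q}` (for `1 ≤ p ≤ q−2 ≤ n−2`): with `k = min(p−1, q−p−1)` and
`l = min(q−p−1, n−q)`, it has domain `[p, p+k] ∪ [q, q+l]` and maps
`p+i ↦ p−i` and `q+j ↦ q−j`. -/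
def gamma (n p q : ℕ) : PTrans := fun x =>
  if p ≤ x ∧ x ≤ p + min (p - 1) (q - p - 1) then some (2 * p - x)
  else if q ≤ x ∧ x ≤ q + min (q - p - 1) (n - q) then some (2 * q - x)
  else none

/-- `γ_{p,q}^{r,s}`: with `u = min(r−s, q−p, n−q+1)`, it has domain
`[p, p+s−1] ∪ [q, q+u−1]` and maps `p+i ↦ p−i` and `q+j ↦ q−j`. -/
def gammaRS (n r p q s : ℕ) : PTrans := fun x =>
  if p ≤ x ∧ x + 1 ≤ p + s then some (2 * p - x)
  else if q ≤ x ∧ x + 1 ≤ q + min (r - s) (min (q - p) (n - q + 1)) then some (2 * q - x)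
  else none

/-- `δ^a_Y`: domain `Y ∪ {a}`, fixes every point of `Y`, maps `a` to `a−1`. -/
def deltaMap (a : ℕ) (Y : Set ℕ) : PTrans :=
  fun x => if x ∈ Y then some x else if x = a then some (a - 1) else none

/-- `ζ_Z`: with `a = max Z` and `b = min Z`, domain `Z ∪ {a+1}`, fixes every
point of `Z`, maps `a+1` to `b−1`. -/
def zetaMap (Z : Set ℕ) : PTrans :=
  fun x => if x ∈ Z then some x else if x = sSup Z + 1 then some (sInf Z - 1) else none

/-- `E_r`: the idempotents of `PORD_n` with image of size exactly `r`. -/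
def Eset (n r : ℕ) : Set PTrans := {f ∈ PORD n | f * f = f ∧ (im f).ncard = r}

/-- `F_r = {ξ_{p,q}^r : 1 ≤ p ≤ n−2, p+1 ≤ q ≤ p+r−2 ≤ n−1}`. -/
def Fset (n r : ℕ) : Set PTrans :=
  {f | ∃ p q : ℕ, 1 ≤ p ∧ p + 2 ≤ n ∧ p + 1 ≤ q ∧ q + 2 ≤ p + r ∧ p + r ≤ n + 1 ∧
    f = xi p q}

/-- `G_n = {γ_{p,q} : 1 ≤ p ≤ q−2 ≤ n−2} \ {γ_{1,n}}`. -/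
def Gset (n : ℕ) : Set PTrans :=
  {f | ∃ p q : ℕ, 1 ≤ p ∧ p + 2 ≤ q ∧ q ≤ n ∧ f = gamma n p q} \ {gamma n 1 n}

/-- `H_n^r = {γ_{p,q}^{r,s} : 1 ≤ p ≤ q−2 ≤ n−2, 1 ≤ s ≤ min{p, q−p, r−1}, (q,s) ≠ (n,1)}`. -/
def Hset (n r : ℕ) : Set PTrans :=
  {f | ∃ p q s : ℕ, 1 ≤ p ∧ p + 2 ≤ q ∧ q ≤ n ∧ 1 ≤ s ∧
    s ≤ min p (min (q - p) (r - 1)) ∧ ¬(q = n ∧ s = 1) ∧ f = gammaRS n r p q s}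

/-- `EI_r = {1_Y : Y ⊆ X_n, |Y| = r}`. -/
def EIset (n r : ℕ) : Set PTrans :=
  {f | ∃ Y : Set ℕ, Y ⊆ Set.Icc 1 n ∧ Y.ncard = r ∧ f = partialId Y}

/-- `FI_r = {δ^a_Y : 2 ≤ a ≤ n, Y ⊆ X_n \ {a−1,a}, |Y| = r−1}`. -/
def FIset (n r : ℕ) : Set PTrans :=
  {f | ∃ (a : ℕ) (Y : Set ℕ), 2 ≤ a ∧ a ≤ n ∧ Y ⊆ Set.Icc 1 n \ {a - 1, a} ∧
    Y.ncard = r - 1 ∧ f = deltaMap a Y}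

/-- `GI_k = {ζ_Z : Z ⊆ X_n \ {1,n}, |Z| = k−1}`. -/
def GIset (n k : ℕ) : Set PTrans :=
  {f | ∃ Z : Set ℕ, Z ⊆ Set.Icc 1 n \ {1, n} ∧ Z.ncard = k - 1 ∧ f = zetaMap Z}

/-- `GI_k^c`: those `ζ_Z ∈ GI_k` with `Z` a convex subset (an interval). -/
def GIcset (n k : ℕ) : Set PTrans :=
  {f | ∃ Z : Set ℕ, Z ⊆ Set.Icc 1 n \ {1, n} ∧ Z.ncard = k - 1 ∧ Z.OrdConnected ∧
    f = zetaMap Z}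

/-- `F^r_{p,q} = {α ∈ PORD(n,r) : α restricted to [p, q+1] equals ξ_{p,q}^r}`. -/
def Frestr (n r p q : ℕ) : Set PTrans :=
  {f ∈ PORDr n r | restrict f (Set.Icc p (q + 1)) = xi p q}

/-- `G_{p,q} = {α ∈ PORD^*(n,r) : α restricted to dom(γ_{p,q}) equals γ_{p,q}}`. -/
def Grestr (n r p q : ℕ) : Set PTrans :=
  {f ∈ PORDr n r ∩ PORDstar n | restrict f (domSet (gamma n p q)) = gamma n p q}

/-- `H^{r,s}_{p,q} = {α ∈ PORD^*(n,r) : α restricted to dom(γ^{r,s}_{p,q}) equals γ^{r,s}_{p,q}}`. -/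
def Hrestr (n r p q s : ℕ) : Set PTrans :=
  {f ∈ PORDr n r ∩ PORDstar n |
    restrict f (domSet (gammaRS n r p q s)) = gammaRS n r p q s}

end

end OrientedPT

namespace OrientedPT

open scoped Classical

/-! ### Cyclic orientation in terms of triples -/

/-- The triple `(a, b, c)` is strictly increasing up to a cyclic rotation. -/
def Cyc {β : Type*} [LT β] (a b c : β) : Prop :=
  (a < b ∧ b < c) ∨ (b < c ∧ c < a) ∨ (c < a ∧ a < b)

section CyclicSuccessor

variable {D : Set ℕ} {a b : ℕ}

theorem cycSucc_mem (ha : a ∈ D) : cycSucc D a ∈ D := by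
  unfold cycSucc
  split_ifs with h
  · exact (Nat.sInf_mem h).1
  · exact Nat.sInf_mem ⟨a, ha⟩

theorem lt_cycSucc (hb : b ∈ D) (hab : a < b) : a < cycSucc D a := by
  unfold cycSucc
  have h : {x ∈ D | a < x}.Nonempty := ⟨b, hb, hab⟩
  rw [if_pos h]
  exact (Nat.sInf_mem h).2

theorem cycSucc_le (hb : b ∈ D) (hab : a < b) : cycSucc D a ≤ b := by
  unfold cycSucc
  have h : {x ∈ D | a < x}.Nonempty := ⟨b, hb, hab⟩
  rw [if_pos h]
  exact Nat.sInf_le ⟨hb, hab⟩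

theorem cycSucc_le_of_forall_le (hb : b ∈ D) (h : ∀ x ∈ D, x ≤ a) : cycSucc D a ≤ b := by
  unfold cycSucc
  have h' : ¬ {x ∈ D | a < x}.Nonempty := by
    rintro ⟨x, hx, hax⟩
    exact absurd (h x hx) (not_le.mpr hax)
  rw [if_neg h']
  exact Nat.sInf_le hb

/-- A drop of `v` from `x` to a larger `y` forces a drop at consecutive points in between. -/
theorem exists_descent_between {v : ℕ → ℤ} {y : ℕ} (hy : y ∈ D) :
    ∀ k x, y - x = k → x ∈ D → x < y → v y < v x →
      ∃ a ∈ D, v (cycSucc D a) < v a ∧ x ≤ a ∧ a < y := by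
  intro k
  induction k using Nat.strong_induction_on with
  | _ k ih =>
    intro x hk hx hxy hv
    by_cases h : v (cycSucc D x) < v x
    · exact ⟨x, hx, h, le_rfl, hxy⟩
    · have h1 := lt_cycSucc hy hxy
      have h2 := cycSucc_le hy hxy
      have h3 : cycSucc D x ≠ y := by
        intro h3
        rw [h3] at h
        exact h hv
      obtain ⟨a, ha, hva, h4, h5⟩ :=
        ih (y - cycSucc D x) (by omega) _ rfl (cycSucc_mem hx) (by omega) (by omega)
      exact ⟨a, ha, hva, by omega, h5⟩

/-- If `v x < v z` with `x < z`, then there is a drop on the cyclic arc from `z` to `x`. -/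
theorem exists_descent_outside {v : ℕ → ℤ} {x z : ℕ} (hD : D.Finite) (hx : x ∈ D)
    (hz : z ∈ D) (hv : v x < v z) :
    ∃ a ∈ D, v (cycSucc D a) < v a ∧ (z ≤ a ∨ a < x) := by
  obtain ⟨e, he, hmax⟩ := hD.exists_maximalFor id D ⟨x, hx⟩
  replace hmax : ∀ y ∈ D, y ≤ e := fun y hy => by
    by_contra h
    exact h (hmax hy (not_le.mp h).le)
  by_cases h1 : v e < v z
  · have hze : z < e := lt_of_le_of_ne (hmax z hz) (by rintro rfl; exact lt_irrefl _ h1)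
    obtain ⟨a, ha, hva, h4, -⟩ := exists_descent_between he _ z rfl hz hze h1
    exact ⟨a, ha, hva, Or.inl h4⟩
  by_cases h2 : v (cycSucc D e) < v e
  · exact ⟨e, he, h2, Or.inl (hmax z hz)⟩
  have h3 : cycSucc D e < x :=
    lt_of_le_of_ne (cycSucc_le_of_forall_le hx hmax) (by rintro h3; rw [h3] at h2; omega)
  obtain ⟨a, ha, hva, -, h5⟩ :=
    exists_descent_between (v := v) hx _ _ rfl (cycSucc_mem he) h3 (by omega)
  exact ⟨a, ha, hva, Or.inr h5⟩

theorem ncard_descents_le_one_iff {v : ℕ → ℤ} (hD : D.Finite) (hv : D.InjOn v) :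
    {a ∈ D | v (cycSucc D a) < v a}.ncard ≤ 1 ↔
      ∀ x ∈ D, ∀ y ∈ D, ∀ z ∈ D, x < y → y < z → Cyc (v x) (v y) (v z) := by
  rw [Set.ncard_le_one (hD.subset (Set.sep_subset _ _))]
  constructor
  · intro h x hx y hy z hz hxy hyz
    have hne1 : v x ≠ v y := fun e => hxy.ne (hv hx hy e)
    have hne2 : v y ≠ v z := fun e => hyz.ne (hv hy hz e)
    have hne3 : v x ≠ v z := fun e => (hxy.trans hyz).ne (hv hx hz e)
    by_contra hc
    unfold Cyc at hc
    have key : (v y < v x ∧ v z < v y) ∨ (v z < v y ∧ v x < v z) ∨ (v x < v z ∧ v y < v x) := by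
      omega
    rcases key with ⟨h1, h2⟩ | ⟨h1, h2⟩ | ⟨h1, h2⟩
    · obtain ⟨a, ha, hva, h4, h5⟩ := exists_descent_between hy _ x rfl hx hxy h1
      obtain ⟨b, hb, hvb, h6, h7⟩ := exists_descent_between hz _ y rfl hy hyz h2
      have := h a ⟨ha, hva⟩ b ⟨hb, hvb⟩
      omega
    · obtain ⟨a, ha, hva, h4, h5⟩ := exists_descent_between hz _ y rfl hy hyz h1
      obtain ⟨b, hb, hvb, h6⟩ := exists_descent_outside hD hx hz h2
      have := h a ⟨ha, hva⟩ b ⟨hb, hvb⟩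
      omega
    · obtain ⟨a, ha, hva, h4, h5⟩ := exists_descent_between hy _ x rfl hx hxy h2
      obtain ⟨b, hb, hvb, h6⟩ := exists_descent_outside hD hx hz h1
      have := h a ⟨ha, hva⟩ b ⟨hb, hvb⟩
      omega
  · intro h
    have key : ∀ a ∈ D, v (cycSucc D a) < v a → ∀ b ∈ D, v (cycSucc D b) < v b → ¬ a < b := by
      intro a ha hva b hb hvb hab
      have ha' := cycSucc_mem ha
      have hb' := cycSucc_mem hb
      have h1 := lt_cycSucc hb hab
      have h2 := cycSucc_le hb hab
      generalize cycSucc D a = a' at *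
      have hba : v b < v a := by
        rcases h2.eq_or_lt with rfl | h2
        · exact hva
        · have := h a ha a' ha' b hb h1 h2
          unfold Cyc at this
          omega
      by_cases hmax : ∀ x ∈ D, x ≤ b
      · have h3 := cycSucc_le_of_forall_le ha hmax
        generalize cycSucc D b = m at *
        rcases h3.eq_or_lt with rfl | h3
        · omega
        · have := h m hb' a ha b hb h3 hab
          unfold Cyc at this
          omega
      · push Not at hmax
        obtain ⟨c, hc, hbc⟩ := hmax
        have h3 := lt_cycSucc hc hbc
        generalize cycSucc D b = m at *
        have h5 := h a ha b hb m hb' hab h3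
        unfold Cyc at h5
        omega
    intro a ha b hb
    rcases lt_trichotomy a b with hab | hab | hab
    · exact absurd hab (key a ha.1 ha.2 b hb.1 hb.2)
    · exact hab
    · exact absurd hab (key b hb.1 hb.2 a ha.1 ha.2)

end CyclicSuccessor

/-- `f` preserves the cyclic order of triples. -/
def CycPres (f : PTrans) : Prop :=
  ∀ ⦃x y z u v w⦄, f x = some u → f y = some v → f z = some w → x < y → y < z → Cyc u v w

/-- `f` reverses the cyclic order of triples. -/
def CycRev (f : PTrans) : Prop :=
  ∀ ⦃x y z u v w⦄, f x = some u → f y = some v → f z = some w → x < y → y < z → Cyc w v u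

/-- `f` is a partial order-decreasing map on `{1, …, n}`. -/
def DecrOn (n : ℕ) (f : PTrans) : Prop :=
  ∀ ⦃x y⦄, f x = some y → 1 ≤ y ∧ y ≤ x ∧ x ≤ n

variable {n r : ℕ} {f g α : PTrans}

theorem mem_domSet {x : ℕ} : x ∈ domSet f ↔ ∃ y, f x = some y :=
  Option.ne_none_iff_exists'

theorem DecrOn.domSet_subset (h : DecrOn n f) : domSet f ⊆ Set.Icc 1 n := by
  intro x hx
  obtain ⟨y, hy⟩ := mem_domSet.mp hx
  have := h hy
  exact ⟨by omega, by omega⟩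

theorem DecrOn.finite_domSet (h : DecrOn n f) : (domSet f).Finite :=
  (Set.finite_Icc 1 n).subset h.domSet_subset

theorem val_eq {x y : ℕ} (h : f x = some y) : val f x = y := by
  simp [val, h]

theorem Inj.injOn_val (h : Inj f) : (domSet f).InjOn (val f) := by
  intro x hx y hy hxy
  obtain ⟨u, hu⟩ := mem_domSet.mp hx
  obtain ⟨v, hv⟩ := mem_domSet.mp hy
  rw [val_eq hu, val_eq hv] at hxy
  exact h x y u hu (hxy ▸ hv)

theorem im_eq_image : im f = val f '' domSet f := by
  ext y
  constructor
  · rintro ⟨x, hx⟩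
    exact ⟨x, mem_domSet.mpr ⟨y, hx⟩, val_eq hx⟩
  · rintro ⟨x, hx, rfl⟩
    obtain ⟨u, hu⟩ := mem_domSet.mp hx
    exact ⟨x, by rw [val_eq hu, hu]⟩

theorem Inj.ncard_im (h : Inj f) : (im f).ncard = (domSet f).ncard := by
  rw [im_eq_image, h.injOn_val.ncard_image]

theorem orientPres_iff (hf : DecrOn n f) (hi : Inj f) : OrientPres f ↔ CycPres f := by
  have hv : (domSet f).InjOn fun a => (val f a : ℤ) := fun x hx y hy h =>
    hi.injOn_val hx hy (by simpa using h)
  have := ncard_descents_le_one_iff hf.finite_domSet hv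
  simp only [Nat.cast_lt] at this
  rw [OrientPres, descents, this]
  constructor
  · intro h x y z u v w hx hy hz hxy hyz
    have := h x (mem_domSet.mpr ⟨_, hx⟩) y (mem_domSet.mpr ⟨_, hy⟩) z (mem_domSet.mpr ⟨_, hz⟩)
      hxy hyz
    simpa [val_eq hx, val_eq hy, val_eq hz, Cyc] using this
  · intro h x hx y hy z hz hxy hyz
    obtain ⟨u, hx⟩ := mem_domSet.mp hx
    obtain ⟨v, hy⟩ := mem_domSet.mp hy
    obtain ⟨w, hz⟩ := mem_domSet.mp hz
    simpa [val_eq hx, val_eq hy, val_eq hz, Cyc] using h hx hy hz hxy hyz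

theorem orientRev_iff (hf : DecrOn n f) (hi : Inj f) : OrientRev f ↔ CycRev f := by
  have hv : (domSet f).InjOn fun a => -(val f a : ℤ) := fun x hx y hy h =>
    hi.injOn_val hx hy (by simpa using h)
  have := ncard_descents_le_one_iff hf.finite_domSet hv
  simp only [neg_lt_neg_iff, Nat.cast_lt] at this
  rw [OrientRev, ascents, this]
  constructor
  · intro h x y z u v w hx hy hz hxy hyz
    have := h x (mem_domSet.mpr ⟨_, hx⟩) y (mem_domSet.mpr ⟨_, hy⟩) z (mem_domSet.mpr ⟨_, hz⟩)
      hxy hyz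
    simp only [val_eq hx, val_eq hy, val_eq hz, Cyc] at this ⊢
    omega
  · intro h x hx y hy z hz hxy hyz
    obtain ⟨u, hx⟩ := mem_domSet.mp hx
    obtain ⟨v, hy⟩ := mem_domSet.mp hy
    obtain ⟨w, hz⟩ := mem_domSet.mp hz
    have := h hx hy hz hxy hyz
    simp only [val_eq hx, val_eq hy, val_eq hz, Cyc] at this ⊢
    omega

theorem mem_IORDr_iff : f ∈ IORDr n r ↔
    DecrOn n f ∧ Inj f ∧ (CycPres f ∨ CycRev f) ∧ (domSet f).ncard ≤ r := by
  constructor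
  · rintro ⟨⟨⟨⟨hd, hi⟩, ho, hdec⟩, hinj⟩, hr⟩
    have hf : DecrOn n f := fun x y h =>
      ⟨(hi ⟨x, h⟩).1, hdec x y h, (hd (mem_domSet.mpr ⟨y, h⟩)).2⟩
    refine ⟨hf, hinj, ?_, hinj.ncard_im ▸ hr⟩
    rwa [← orientPres_iff hf hinj, ← orientRev_iff hf hinj]
  · rintro ⟨hf, hinj, ho, hr⟩
    rw [← orientPres_iff hf hinj, ← orientRev_iff hf hinj] at ho
    refine ⟨⟨⟨⟨hf.domSet_subset, ?_⟩, ho, fun x y h => (hf h).2.1⟩, hinj⟩, hinj.ncard_im ▸ hr⟩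
    rintro y ⟨x, hx⟩
    have := hf hx
    exact ⟨by omega, by omega⟩

/-! ### Products -/

theorem mul_eq_some {x z : ℕ} : (f * g) x = some z ↔ ∃ y, f x = some y ∧ g y = some z :=
  Option.bind_eq_some_iff

theorem cyc_map {P : ℕ → ℕ → ℕ → Prop} (hrot : ∀ a b c, P a b c → P b c a)
    (h : ∀ ⦃x y z u v w⦄, g x = some u → g y = some v → g z = some w → x < y → y < z → P u v w)
    {x y z u v w : ℕ} (hx : g x = some u) (hy : g y = some v) (hz : g z = some w)
    (hc : Cyc x y z) : P u v w := by
  rcases hc with ⟨h1, h2⟩ | ⟨h1, h2⟩ | ⟨h1, h2⟩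
  · exact h hx hy hz h1 h2
  · exact hrot _ _ _ (hrot _ _ _ (h hy hz hx h1 h2))
  · exact hrot _ _ _ (h hz hx hy h1 h2)

theorem Cyc.rotate {a b c : ℕ} (h : Cyc a b c) : Cyc b c a := by
  unfold Cyc at *; omega

theorem CycPres.map_cyc (h : CycPres g) {x y z u v w : ℕ} (hx : g x = some u) (hy : g y = some v)
    (hz : g z = some w) (hc : Cyc x y z) : Cyc u v w :=
  cyc_map (P := fun a b c => Cyc a b c) (fun _ _ _ h => h.rotate) h hx hy hz hc

theorem CycRev.map_cyc (h : CycRev g) {x y z u v w : ℕ} (hx : g x = some u) (hy : g y = some v)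
    (hz : g z = some w) (hc : Cyc x y z) : Cyc w v u :=
  cyc_map (P := fun a b c => Cyc c b a) (fun _ _ _ h => h.rotate.rotate) h hx hy hz hc

theorem mul_mem_IORDr (hf : f ∈ IORDr n r) (hg : g ∈ IORDr n r) : f * g ∈ IORDr n r := by
  rw [mem_IORDr_iff] at *
  obtain ⟨hf1, hf2, hf3, hf4⟩ := hf
  obtain ⟨hg1, hg2, hg3, -⟩ := hg
  refine ⟨?_, ?_, ?_, ?_⟩
  · intro x z h
    obtain ⟨y, h1, h2⟩ := mul_eq_some.mp h
    have := hf1 h1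
    have := hg1 h2
    omega
  · intro x x' z h h'
    obtain ⟨y, h1, h2⟩ := mul_eq_some.mp h
    obtain ⟨y', h1', h2'⟩ := mul_eq_some.mp h'
    obtain rfl := hg2 _ _ _ h2 h2'
    exact hf2 _ _ _ h1 h1'
  · rcases hf3 with hf3 | hf3 <;> rcases hg3 with hg3 | hg3
    · left
      intro x y z u v w hx hy hz hxy hyz
      obtain ⟨x', hx, hx'⟩ := mul_eq_some.mp hx
      obtain ⟨y', hy, hy'⟩ := mul_eq_some.mp hy
      obtain ⟨z', hz, hz'⟩ := mul_eq_some.mp hz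
      exact hg3.map_cyc hx' hy' hz' (hf3 hx hy hz hxy hyz)
    · right
      intro x y z u v w hx hy hz hxy hyz
      obtain ⟨x', hx, hx'⟩ := mul_eq_some.mp hx
      obtain ⟨y', hy, hy'⟩ := mul_eq_some.mp hy
      obtain ⟨z', hz, hz'⟩ := mul_eq_some.mp hz
      exact hg3.map_cyc hx' hy' hz' (hf3 hx hy hz hxy hyz)
    · right
      intro x y z u v w hx hy hz hxy hyz
      obtain ⟨x', hx, hx'⟩ := mul_eq_some.mp hx
      obtain ⟨y', hy, hy'⟩ := mul_eq_some.mp hy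
      obtain ⟨z', hz, hz'⟩ := mul_eq_some.mp hz
      exact hg3.map_cyc hz' hy' hx' (hf3 hx hy hz hxy hyz)
    · left
      intro x y z u v w hx hy hz hxy hyz
      obtain ⟨x', hx, hx'⟩ := mul_eq_some.mp hx
      obtain ⟨y', hy, hy'⟩ := mul_eq_some.mp hy
      obtain ⟨z', hz, hz'⟩ := mul_eq_some.mp hz
      exact hg3.map_cyc hz' hy' hx' (hf3 hx hy hz hxy hyz)
  · refine (Set.ncard_le_ncard ?_ hf1.finite_domSet).trans hf4
    intro x hx
    obtain ⟨z, hz⟩ := mem_domSet.mp hx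
    obtain ⟨y, h1, -⟩ := mul_eq_some.mp hz
    exact mem_domSet.mpr ⟨y, h1⟩

/-! ### A strictly monotone weight -/

/-- The graph of `f` inside `{1, …, n}²`. -/
noncomputable def graph (n : ℕ) (f : PTrans) : Finset (ℕ × ℕ) :=
  (Finset.Icc 1 n ×ˢ Finset.Icc 1 n).filter fun p => f p.1 = some p.2

/-- The weight of `f`: it grows with the domain and shrinks with the displacement. -/
noncomputable def weight (n : ℕ) (f : PTrans) : ℕ := ∑ p ∈ graph n f, (n + p.2 - p.1)

theorem DecrOn.mem_graph (hf : DecrOn n f) {p : ℕ × ℕ} : p ∈ graph n f ↔ f p.1 = some p.2 := by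
  simp only [graph, Finset.mem_filter, Finset.mem_product, Finset.mem_Icc, and_iff_right_iff_imp]
  intro h
  have := hf h
  omega

theorem DecrOn.graph_ne (hf : DecrOn n f) (hg : DecrOn n g) (h : f ≠ g) :
    graph n f ≠ graph n g := by
  refine fun he => h ?_
  funext x
  ext y
  rw [← hf.mem_graph (p := (x, y)), he, hg.mem_graph]

theorem weight_lt_weight (hf : DecrOn n f) (hg : DecrOn n g) (hfg : f ≠ g)
    (φ : ℕ × ℕ → ℕ × ℕ) (hmaps : ∀ p ∈ graph n f, φ p ∈ graph n g)
    (hinj : Set.InjOn φ (graph n f))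
    (hle : ∀ p ∈ graph n f, φ p ≠ p → n + p.2 - p.1 < n + (φ p).2 - (φ p).1) :
    weight n f < weight n g := by
  have hle' : ∀ p ∈ graph n f, n + p.2 - p.1 ≤ n + (φ p).2 - (φ p).1 := fun p hp => by
    by_cases h : φ p = p
    · rw [h]
    · exact (hle p hp h).le
  by_cases h : ∃ p ∈ graph n f, φ p ≠ p
  · obtain ⟨p, hp, hne⟩ := h
    calc weight n f < ∑ p ∈ graph n f, (n + (φ p).2 - (φ p).1) :=
          Finset.sum_lt_sum hle' ⟨p, hp, hle p hp hne⟩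
      _ = ∑ q ∈ (graph n f).image φ, (n + q.2 - q.1) := 
          (Finset.sum_image (f := fun q : ℕ × ℕ => n + q.2 - q.1) hinj).symm
      _ ≤ weight n g :=
          Finset.sum_le_sum_of_subset (Finset.image_subset_iff.mpr hmaps)
  · push Not at h
    have hsub : graph n f ⊆ graph n g := fun p hp => by
      have := hmaps p hp
      rwa [h p hp] at this
    obtain ⟨q, hq, hq'⟩ := Finset.exists_of_ssubset
      (Finset.ssubset_iff_subset_ne.mpr ⟨hsub, hf.graph_ne hg hfg⟩)
    refine Finset.sum_lt_sum_of_subset hsub hq hq' ?_ (fun _ _ _ => Nat.zero_le _)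
    have := hg (hg.mem_graph.mp hq)
    omega

theorem weight_mul_lt_left (hf : DecrOn n f) (hg : DecrOn n g) (hfg : DecrOn n (f * g))
    (hne : f * g ≠ f) : weight n (f * g) < weight n f := by
  refine weight_lt_weight hfg hf hne (fun p => (p.1, val f p.1)) ?_ ?_ ?_
  · intro p hp
    obtain ⟨y, h1, -⟩ := mul_eq_some.mp (hfg.mem_graph.mp hp)
    rw [hf.mem_graph]
    simpa [val_eq h1] using h1
  · intro p hp q hq h
    have h1 := hfg.mem_graph.mp hp
    have h2 := hfg.mem_graph.mp hq
    simp only [Prod.mk.injEq] at h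
    rw [h.1, h2] at h1
    exact Prod.ext h.1 (Option.some.inj h1).symm
  · intro p hp h
    obtain ⟨y, h1, h2⟩ := mul_eq_some.mp (hfg.mem_graph.mp hp)
    have := hf h1
    have := hg h2
    simp only [val_eq h1, ne_eq, Prod.ext_iff, true_and] at h ⊢
    omega

theorem weight_mul_lt_right (hf : DecrOn n f) (hfi : Inj f) (hg : DecrOn n g)
    (hfg : DecrOn n (f * g)) (hne : f * g ≠ g) : weight n (f * g) < weight n g := by
  refine weight_lt_weight hfg hg hne (fun p => (val f p.1, p.2)) ?_ ?_ ?_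
  · intro p hp
    obtain ⟨y, h1, h2⟩ := mul_eq_some.mp (hfg.mem_graph.mp hp)
    rw [hg.mem_graph]
    simpa [val_eq h1] using h2
  · intro p hp q hq h
    obtain ⟨y, h1, -⟩ := mul_eq_some.mp (hfg.mem_graph.mp hp)
    obtain ⟨y', h1', -⟩ := mul_eq_some.mp (hfg.mem_graph.mp hq)
    simp only [Prod.mk.injEq, val_eq h1, val_eq h1'] at h
    obtain ⟨rfl, h⟩ := h
    exact Prod.ext (hfi _ _ _ h1 h1') h
  · intro p hp h
    obtain ⟨y, h1, h2⟩ := mul_eq_some.mp (hfg.mem_graph.mp hp)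
    have := hf h1
    have := hg h2
    simp only [val_eq h1, ne_eq, Prod.ext_iff, and_true] at h ⊢
    omega

theorem weight_le (n : ℕ) (f : PTrans) :
    weight n f ≤ ∑ p ∈ Finset.Icc 1 n ×ˢ Finset.Icc 1 n, (n + p.2 - p.1) :=
  Finset.sum_le_sum_of_subset (Finset.filter_subset _ _)

/-- A maximal subsemigroup of `IORD(n,r)` is the complement of an undecomposable element. -/
theorem exists_undecomposable_of_isMaximalSubsemigroup {S : Set PTrans}
    (h : IsMaximalSubsemigroup (IORDr n r) S) :
    ∃ α ∈ IORDr n r, Undecomposable (IORDr n r) α ∧ S = IORDr n r \ {α} := by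
  obtain ⟨⟨hsub, hmul⟩, hne, hmax⟩ := h
  have hex : (IORDr n r \ S).Nonempty := by
    rw [Set.nonempty_iff_ne_empty, ne_eq, Set.sdiff_eq_empty]
    exact fun h => hne (hsub.antisymm h)
  obtain ⟨α, hα, hαmax⟩ : ∃ α ∈ IORDr n r \ S, ∀ β ∈ IORDr n r \ S, weight n β ≤ weight n α := by
    have hbdd : BddAbove (weight n '' (IORDr n r \ S)) :=
      ⟨_, by rintro _ ⟨β, -, rfl⟩; exact weight_le n β⟩
    obtain ⟨α, hα, h⟩ := Nat.sSup_mem (hex.image _) hbdd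
    exact ⟨α, hα, fun β hβ => h ▸ le_csSup hbdd ⟨β, hβ, rfl⟩⟩
  have hund : Undecomposable (IORDr n r) α := by
    intro x hx y hy hxy
    by_contra hcon
    push Not at hcon
    obtain ⟨hx1, hx2, -⟩ := mem_IORDr_iff.mp hx
    obtain ⟨hy1, -⟩ := mem_IORDr_iff.mp hy
    obtain ⟨hα1, -⟩ := mem_IORDr_iff.mp hα.1
    subst hxy
    refine hα.2 (hmul x ?_ y ?_)
    · by_contra hxS
      exact absurd (hαmax x ⟨hx, hxS⟩) (not_le.mpr (weight_mul_lt_left hx1 hy1 hα1 hcon.1))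
    · by_contra hyS
      exact absurd (hαmax y ⟨hy, hyS⟩) (not_le.mpr (weight_mul_lt_right hx1 hx2 hy1 hα1 hcon.2))
  refine ⟨α, hα.1, hund, hmax _ ⟨Set.sdiff_subset, ?_⟩ ?_ ?_⟩
  · rintro a ⟨ha, haα⟩ b ⟨hb, hbα⟩
    refine ⟨mul_mem_IORDr ha hb, fun hab => ?_⟩
    rcases hund a ha b hb (Set.mem_singleton_iff.mp hab).symm with h | h
    · exact haα h.symm
    · exact hbα h.symm
  · intro h
    have := hα.1
    rw [← h] at this
    exact this.2 rfl
  · intro x hx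
    exact ⟨hsub hx, fun h => hα.2 (Set.mem_singleton_iff.mp h ▸ hx)⟩

/-! ### Membership of the distinguished maps -/

theorem ncard_insert_sdiff_singleton_le {D : Set ℕ} (hD : D.Finite) {e : ℕ} (he : e ∈ D) (c : ℕ) :
    (insert c (D \ {e})).ncard ≤ D.ncard := by
  have h1 := Set.ncard_insert_le c (D \ {e})
  have h2 := Set.ncard_sdiff_singleton_add_one he hD
  omega

theorem partialId_eq_some {Y : Set ℕ} {x y : ℕ} : partialId Y x = some y ↔ x ∈ Y ∧ x = y := by
  unfold partialId
  split_ifs with h <;> simp [h]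

theorem cycPres_of_increasing
    (h : ∀ x y u v, f x = some u → f y = some v → x < y → u < v) : CycPres f :=
  fun _ _ _ _ _ _ hx hy hz hxy hyz => Or.inl ⟨h _ _ _ _ hx hy hxy, h _ _ _ _ hy hz hyz⟩

theorem partialId_mem {Y : Set ℕ} (hY : Y ⊆ Set.Icc 1 n) (hc : Y.ncard ≤ r) :
    partialId Y ∈ IORDr n r := by
  rw [mem_IORDr_iff]
  refine ⟨?_, ?_, Or.inl (cycPres_of_increasing ?_), ?_⟩
  · intro x y h
    obtain ⟨hx, rfl⟩ := partialId_eq_some.mp h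
    exact ⟨(hY hx).1, le_rfl, (hY hx).2⟩
  · intro x y z hx hy
    exact (partialId_eq_some.mp hx).2.trans (partialId_eq_some.mp hy).2.symm
  · intro x y u v hx hy hxy
    rwa [← (partialId_eq_some.mp hx).2, ← (partialId_eq_some.mp hy).2]
  · convert hc using 2
    ext x
    simp [mem_domSet, partialId_eq_some]

/-- The map fixing every point of `Z` and sending `e` to `c`. -/
noncomputable def fixExcept (Z : Set ℕ) (e c : ℕ) : PTrans :=
  fun x => if x ∈ Z then some x else if x = e then some c else none

theorem fixExcept_eq_some {Z : Set ℕ} {e c x y : ℕ} :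
    fixExcept Z e c x = some y ↔ x ∈ Z ∧ x = y ∨ x ∉ Z ∧ x = e ∧ c = y := by
  unfold fixExcept
  split_ifs with h1 h2
  · simp [h1]
  · simp [h1, ← h2]
  · simp [h1, h2]

theorem fixExcept_mem {Z : Set ℕ} {e c : ℕ} (hZ : Z ⊆ Set.Icc 1 n) (hc : 1 ≤ c) (hce : c ≤ e)
    (hen : e ≤ n) (hcZ : c ∉ Z) (hcard : Z.ncard + 1 ≤ r) (hor : CycPres (fixExcept Z e c)) :
    fixExcept Z e c ∈ IORDr n r := by
  rw [mem_IORDr_iff]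
  refine ⟨?_, ?_, Or.inl hor, ?_⟩
  · intro x y h
    rcases fixExcept_eq_some.mp h with ⟨hx, rfl⟩ | ⟨-, rfl, rfl⟩
    · exact ⟨(hZ hx).1, le_rfl, (hZ hx).2⟩
    · exact ⟨hc, hce, hen⟩
  · intro x y z hx hy
    rw [fixExcept_eq_some] at hx hy
    grind
  · refine (Set.ncard_le_ncard (t := insert e Z) ?_ ?_).trans ((Set.ncard_insert_le e Z).trans hcard)
    · intro x hx
      obtain ⟨y, hy⟩ := mem_domSet.mp hx
      rw [fixExcept_eq_some] at hy
      grind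
    · exact ((Set.finite_Icc 1 n).subset hZ).insert e

theorem deltaMap_eq_fixExcept (a : ℕ) (Y : Set ℕ) : deltaMap a Y = fixExcept Y a (a - 1) := rfl

theorem deltaMap_mem {a : ℕ} {Y : Set ℕ} (ha : 2 ≤ a) (han : a ≤ n)
    (hY : Y ⊆ Set.Icc 1 n \ {a - 1, a}) (hcard : Y.ncard + 1 ≤ r) : deltaMap a Y ∈ IORDr n r := by
  have hY' : ∀ y ∈ Y, y ≠ a - 1 ∧ y ≠ a := fun y hy => by
    have := (hY hy).2
    simpa using this
  rw [deltaMap_eq_fixExcept]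
  refine fixExcept_mem (fun y hy => (hY hy).1) (by omega) (by omega) han
    (fun h => (hY' _ h).1 rfl) hcard (cycPres_of_increasing ?_)
  intro x y u v hx hy hxy
  rw [fixExcept_eq_some] at hx hy
  have := hY' x
  have := hY' y
  grind

theorem cycPres_fixExcept_of_lt {Z : Set ℕ} {e c : ℕ} (hc : ∀ z ∈ Z, c < z) (he : ∀ z ∈ Z, z < e) :
    CycPres (fixExcept Z e c) := by
  intro x y z u v w hx hy hz hxy hyz
  rw [fixExcept_eq_some] at hx hy hz
  have := hc x
  have := hc y
  have := he x
  have := he y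
  have := he z
  unfold Cyc
  grind

theorem zetaMap_mem {Z : Set ℕ} (hZ : Z ⊆ Set.Icc 1 n \ {1, n}) (hne : Z.Nonempty)
    (hcard : Z.ncard + 1 ≤ r) : zetaMap Z ∈ IORDr n r := by
  have hZ1 : Z ⊆ Set.Icc 1 n := fun z hz => (hZ hz).1
  have hZ' : ∀ z ∈ Z, 2 ≤ z ∧ z < n := fun z hz => by
    have h1 := (hZ hz).1
    have h2 := (hZ hz).2
    simp only [Set.mem_Icc, Set.mem_insert_iff, Set.mem_singleton_iff, not_or] at h1 h2
    omega
  have hbdd : BddAbove Z := ⟨n, fun z hz => (hZ1 hz).2⟩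
  have h1 := hZ' _ (Nat.sInf_mem hne)
  have h2 := hZ' _ (Nat.sSup_mem hne hbdd)
  have h3 : ∀ z ∈ Z, sInf Z ≤ z := fun z hz => Nat.sInf_le hz
  have h4 : ∀ z ∈ Z, z ≤ sSup Z := fun z hz => le_csSup hbdd hz
  have h5 := h3 _ (Nat.sSup_mem hne hbdd)
  change fixExcept Z (sSup Z + 1) (sInf Z - 1) ∈ IORDr n r
  refine fixExcept_mem hZ1 (by omega) (by omega) (by omega) (fun h => ?_) hcard
    (cycPres_fixExcept_of_lt (fun z hz => ?_) fun z hz => ?_)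
  · have := h3 _ h
    omega
  · have := h3 _ hz
    omega
  · have := h4 _ hz
    omega

theorem gamma_eq_some {p q x y : ℕ} (hpq : p < q) : gamma n p q x = some y ↔
    (p ≤ x ∧ x ≤ p + min (p - 1) (q - p - 1) ∧ y = 2 * p - x) ∨
      (q ≤ x ∧ x ≤ q + min (q - p - 1) (n - q) ∧ y = 2 * q - x) := by
  unfold gamma
  split_ifs with h1 h2
  · rw [Option.some_inj]
    omega
  · rw [Option.some_inj]
    omega
  · simp only [false_iff]
    omega

theorem gamma_mem (hr : n - n / 3 ≤ r) {p q : ℕ} (hp : 1 ≤ p) (hpq : p + 2 ≤ q) (hq : q ≤ n) :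
    gamma n p q ∈ IORDr n r := by
  have hlt : p < q := by omega
  rw [mem_IORDr_iff]
  refine ⟨?_, ?_, Or.inr ?_, ?_⟩
  · intro x y h
    rw [gamma_eq_some hlt] at h
    omega
  · intro x y z hx hy
    rw [gamma_eq_some hlt] at hx hy
    omega
  · intro x y z u v w hx hy hz hxy hyz
    rw [gamma_eq_some hlt] at hx hy hz
    unfold Cyc
    omega
  · have hsub : domSet (gamma n p q) ⊆ (Finset.Icc p (p + min (p - 1) (q - p - 1)) ∪
        Finset.Icc q (q + min (q - p - 1) (n - q)) : Finset ℕ) := by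
      intro x hx
      obtain ⟨y, hy⟩ := mem_domSet.mp hx
      rw [gamma_eq_some hlt] at hy
      simp only [Finset.coe_union, Finset.coe_Icc, Set.mem_union, Set.mem_Icc]
      omega
    have h1 := Set.ncard_le_ncard hsub (Finset.finite_toSet _)
    rw [Set.ncard_coe_finset] at h1
    have h2 := Finset.card_union_le (Finset.Icc p (p + min (p - 1) (q - p - 1)))
      (Finset.Icc q (q + min (q - p - 1) (n - q)))
    rw [Nat.card_Icc, Nat.card_Icc] at h2
    omega

/-! ### Factorizations -/

theorem oriented_of_reindex_domain (hf : CycPres f ∨ CycRev f) (σ : ℕ → ℕ)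
    (h : ∀ ⦃x u⦄, g x = some u → f (σ x) = some u)
    (hσ : ∀ ⦃x y z⦄, x ∈ domSet g → y ∈ domSet g → z ∈ domSet g → x < y → y < z →
      Cyc (σ x) (σ y) (σ z)) : CycPres g ∨ CycRev g := by
  refine hf.imp (fun hf => ?_) (fun hf => ?_) <;>
  · intro x y z u v w hx hy hz hxy hyz
    exact hf.map_cyc (h hx) (h hy) (h hz) (hσ (mem_domSet.mpr ⟨_, hx⟩) (mem_domSet.mpr ⟨_, hy⟩)
      (mem_domSet.mpr ⟨_, hz⟩) hxy hyz)

theorem partialId_mul_of_extends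
    (h : ∀ ⦃x y⦄, f x = some y → g x = some y) : partialId (domSet f) * g = f := by
  funext x
  ext y
  rw [mul_eq_some]
  simp only [partialId_eq_some]
  constructor
  · rintro ⟨_, ⟨hx, rfl⟩, hy⟩
    obtain ⟨z, hz⟩ := mem_domSet.mp hx
    rw [h hz] at hy
    rwa [hz]
  · intro hx
    exact ⟨x, ⟨mem_domSet.mpr ⟨y, hx⟩, rfl⟩, h hx⟩

/-- An undecomposable element which is not a partial identity has no proper extension. -/
theorem Undecomposable.eq_of_extends (hα : α ∈ IORDr n r) (hU : Undecomposable (IORDr n r) α)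
    (hid : α ≠ partialId (domSet α)) (hg : g ∈ IORDr n r)
    (h : ∀ ⦃x y⦄, α x = some y → g x = some y) : α = g := by
  obtain ⟨h1, -, -, h4⟩ := mem_IORDr_iff.mp hα
  exact (hU _ (partialId_mem h1.domSet_subset h4) g hg (partialId_mul_of_extends h).symm).resolve_left
    hid

/-- Moving a single point `e` of the domain to a free point `c` between `e` and its image. -/
theorem Undecomposable.eq_fixExcept (hα : α ∈ IORDr n r) (hU : Undecomposable (IORDr n r) α)
    {e v c : ℕ} (he : α e = some v) (hvc : v ≤ c) (hce : c < e) (hc : c ∉ domSet α)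
    (hpres : CycPres (fixExcept (domSet α \ {e}) e c))
    (hσ : ∀ x ∈ insert c (domSet α \ {e}), ∀ y ∈ insert c (domSet α \ {e}),
      ∀ z ∈ insert c (domSet α \ {e}), x < y → y < z →
        Cyc (if x = c then e else x) (if y = c then e else y) (if z = c then e else z)) :
    α = fixExcept (domSet α \ {e}) e c := by
  obtain ⟨h1, h2, h3, h4⟩ := mem_IORDr_iff.mp hα
  have hv := h1 he
  have hed : e ∈ domSet α := mem_domSet.mpr ⟨v, he⟩
  have hc' : ∀ u, α c ≠ some u := fun u hu => hc (mem_domSet.mpr ⟨u, hu⟩)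
  have hcard := Set.ncard_sdiff_singleton_add_one hed h1.finite_domSet
  let y : PTrans := fun z => if z = c then some v else if z = e then none else α z
  have hy : ∀ z u, y z = some u ↔ (z = c ∧ u = v) ∨ (z ≠ c ∧ z ≠ e ∧ α z = some u) := by
    intro z u
    simp only [y]
    split_ifs with h5 h6
    · simp [h5, eq_comm]
    · simp [h6, hce.ne']
    · simp [h5, h6]
  have hydom : domSet y ⊆ insert c (domSet α \ {e}) := by
    intro z hz
    obtain ⟨u, hu⟩ := mem_domSet.mp hz
    rcases (hy z u).mp hu with ⟨rfl, -⟩ | ⟨-, h6, h7⟩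
    · exact Set.mem_insert _ _
    · exact Set.mem_insert_of_mem _ ⟨mem_domSet.mpr ⟨u, h7⟩, h6⟩
  have hymem : y ∈ IORDr n r := by
    rw [mem_IORDr_iff]
    refine ⟨?_, ?_, ?_, ?_⟩
    · intro z u h
      rw [hy] at h
      rcases h with ⟨rfl, rfl⟩ | ⟨-, -, h⟩
      · omega
      · exact h1 h
    · intro z z' u h h'
      rw [hy] at h h'
      have h5 := h2 z z' u
      have h6 := h2 z e u
      have h7 := h2 z' e u
      grind
    · refine oriented_of_reindex_domain h3 (fun z => if z = c then e else z) ?_ ?_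
      · intro z u h
        rw [hy] at h
        grind
      · exact fun x y z hx hy hz => hσ x (hydom hx) y (hydom hy) z (hydom hz)
    · exact le_trans (Set.ncard_le_ncard hydom ((h1.finite_domSet.sdiff).insert _))
        ((ncard_insert_sdiff_singleton_le h1.finite_domSet hed _).trans h4)
  have hxmem : fixExcept (domSet α \ {e}) e c ∈ IORDr n r :=
    fixExcept_mem (fun z hz => h1.domSet_subset hz.1) (by omega) hce.le hv.2.2
      (fun h => hc h.1) (by omega) hpres
  refine (hU _ hxmem y hymem ?_).resolve_right fun h => ?_
  · funext z
    ext u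
    rw [mul_eq_some]
    simp only [fixExcept_eq_some, hy, Set.mem_sdiff, Set.mem_singleton_iff]
    constructor
    · intro h
      by_cases hze : z = e
      · have huv : u = v := by
          rw [hze, he] at h
          exact (Option.some.inj h).symm
        exact ⟨c, Or.inr ⟨fun h => h.2 hze, hze, rfl⟩, Or.inl ⟨rfl, huv⟩⟩
      · exact ⟨z, Or.inl ⟨⟨mem_domSet.mpr ⟨u, h⟩, hze⟩, rfl⟩,
          Or.inr ⟨fun hzc => hc' u (hzc ▸ h), hze, h⟩⟩
    · rintro ⟨w, ⟨⟨h5, h6⟩, rfl⟩ | ⟨h5, rfl, rfl⟩, ⟨h7, h8⟩ | ⟨h7, h8, h9⟩⟩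
      · exact absurd (h7 ▸ h5) hc
      · exact h9
      · rw [he, h8]
      · exact absurd rfl h7
  · have := (hy e v).mp (h ▸ he)
    omega

theorem Undecomposable.eq_deltaMap (hα : α ∈ IORDr n r) (hU : Undecomposable (IORDr n r) α)
    {e v : ℕ} (he : α e = some v) (hve : v < e) (hpred : e - 1 ∉ domSet α) :
    α = deltaMap e (domSet α \ {e}) := by
  have hne : ∀ z ∈ domSet α \ {e}, z ≠ e ∧ z ≠ e - 1 := fun z hz =>
    ⟨hz.2, by rintro rfl; exact hpred hz.1⟩
  have hne' : ∀ z ∈ insert (e - 1) (domSet α \ {e}), z ≠ e := by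
    rintro z (rfl | hz)
    · omega
    · exact hz.2
  refine hU.eq_fixExcept hα he (by omega) (by omega) hpred (cycPres_of_increasing ?_) ?_
  · intro x y u v hx hy hxy
    rw [fixExcept_eq_some] at hx hy
    have := hne x
    have := hne y
    grind
  · intro x hx y hy z hz hxy hyz
    have := hne' x hx
    have := hne' y hy
    have := hne' z hz
    left
    constructor <;> split_ifs <;> omega

theorem Undecomposable.eq_fixExcept_of_lt_min (hα : α ∈ IORDr n r)
    (hU : Undecomposable (IORDr n r) α) {b e v : ℕ} (hmin : ∀ z ∈ domSet α, b ≤ z)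
    (hmax : ∀ z ∈ domSet α, z ≤ e) (he : α e = some v) (hvb : v < b) :
    α = fixExcept (domSet α \ {e}) e (b - 1) := by
  have hbe := hmin e (mem_domSet.mpr ⟨v, he⟩)
  have hlt : ∀ z ∈ domSet α \ {e}, b ≤ z ∧ z < e := fun z hz =>
    ⟨hmin z hz.1, lt_of_le_of_ne (hmax z hz.1) hz.2⟩
  have hlt' : ∀ z ∈ insert (b - 1) (domSet α \ {e}), z = b - 1 ∨ (b ≤ z ∧ z < e) := by
    rintro z (rfl | hz)
    · exact Or.inl rfl
    · exact Or.inr (hlt z hz)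
  refine hU.eq_fixExcept hα he (by omega) (by omega) (fun h => ?_) (cycPres_fixExcept_of_lt
    (fun z hz => ?_) fun z hz => (hlt z hz).2) ?_
  · have := hmin _ h
    omega
  · have := hlt z hz
    omega
  · intro x hx y hy z hz hxy hyz
    have := hlt' x hx
    have := hlt' y hy
    have := hlt' z hz
    unfold Cyc
    split_ifs <;> omega

theorem Undecomposable.increasing_of_succ_notMem (hα : α ∈ IORDr n r)
    (hU : Undecomposable (IORDr n r) α) {e v : ℕ} (he : α e = some v) (hve : v < e)
    (hsucc : v + 1 ∉ im α) {x y u w : ℕ} (hx : α x = some u) (hy : α y = some w) (hxy : x < y) :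
    u < w := by
  obtain ⟨h1, h2, h3, h4⟩ := mem_IORDr_iff.mp hα
  have hv := h1 he
  have hsucc' : ∀ z, α z ≠ some (v + 1) := fun z hz => hsucc ⟨z, hz⟩
  have hfin : (im α).Finite := by
    rw [im_eq_image]
    exact h1.finite_domSet.image _
  have hvim : v ∈ im α := ⟨e, he⟩
  have hcard := Set.ncard_sdiff_singleton_add_one hvim hfin
  rw [h2.ncard_im] at hcard
  let β : PTrans := fun z => if z = e then some (v + 1) else α z
  have hβ : ∀ z u, β z = some u ↔ (z = e ∧ u = v + 1) ∨ (z ≠ e ∧ α z = some u) := by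
    intro z u
    simp only [β]
    split_ifs with h5
    · simp [h5, eq_comm]
    · simp [h5]
  have hβα : ∀ z u, β z = some u → u ≠ v ∧ α z = some (if u = v + 1 then v else u) := by
    intro z u h
    have := h2 z e v
    have := hsucc' z
    rw [hβ] at h
    grind
  have hβmem : β ∈ IORDr n r := by
    rw [mem_IORDr_iff]
    refine ⟨?_, ?_, ?_, ?_⟩
    · intro z u h
      rw [hβ] at h
      rcases h with ⟨rfl, rfl⟩ | ⟨-, h⟩
      · omega
      · exact h1 h
    · intro z z' u h h'
      exact h2 _ _ _ (hβα _ _ h).2 (hβα _ _ h').2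
    · refine h3.imp (fun h3 => ?_) (fun h3 => ?_)
      · intro x y z u v w hx hy hz hxy hyz
        obtain ⟨hu, hx⟩ := hβα _ _ hx
        obtain ⟨hv, hy⟩ := hβα _ _ hy
        obtain ⟨hw, hz⟩ := hβα _ _ hz
        have := h3 hx hy hz hxy hyz
        unfold Cyc at *
        split_ifs at this <;> omega
      · intro x y z u v w hx hy hz hxy hyz
        obtain ⟨hu, hx⟩ := hβα _ _ hx
        obtain ⟨hv, hy⟩ := hβα _ _ hy
        obtain ⟨hw, hz⟩ := hβα _ _ hz
        have := h3 hx hy hz hxy hyz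
        unfold Cyc at *
        split_ifs at this <;> omega
    · refine le_trans (Set.ncard_le_ncard (fun z hz => ?_) h1.finite_domSet) h4
      obtain ⟨u, hu⟩ := mem_domSet.mp hz
      exact mem_domSet.mpr ⟨_, (hβα _ _ hu).2⟩
  have hδmem : deltaMap (v + 1) (im α \ {v}) ∈ IORDr n r := by
    refine deltaMap_mem (by omega) (by omega) ?_ (by omega)
    rintro z ⟨⟨t, hz⟩, hzv⟩
    have h5 := h1 hz
    refine ⟨⟨by omega, by omega⟩, ?_⟩
    rintro (rfl | rfl)
    · exact hzv rfl
    · exact hsucc ⟨t, hz⟩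
  have hδ := (hU β hβmem _ hδmem ?_).resolve_left fun h => ?_
  · have key : ∀ z t, α z = some t → z ≠ v ∧ t = if z = v + 1 then v else z := by
      intro z t hz
      have hz' := hz
      rw [hδ, deltaMap_eq_fixExcept, fixExcept_eq_some] at hz'
      rcases hz' with ⟨⟨hzim, hzv⟩, rfl⟩ | ⟨-, rfl, rfl⟩
      · exact ⟨hzv, by rw [if_neg]; rintro rfl; exact hsucc hzim⟩
      · simp
    have h5 := key _ _ hx
    have h6 := key _ _ hy
    rw [h5.2, h6.2]
    split_ifs <;> omega
  · funext z
    ext u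
    rw [mul_eq_some, deltaMap_eq_fixExcept]
    simp only [fixExcept_eq_some, hβ, Set.mem_sdiff, Set.mem_singleton_iff, add_tsub_cancel_right]
    constructor
    · intro h
      by_cases hze : z = e
      · have huv : u = v := by
          rw [hze, he] at h
          exact (Option.some.inj h).symm
        exact ⟨v + 1, Or.inl ⟨hze, rfl⟩, Or.inr ⟨fun h => hsucc h.1, rfl, huv.symm⟩⟩
      · exact ⟨u, Or.inr ⟨hze, h⟩, Or.inl ⟨⟨⟨z, h⟩, fun huv => hze (h2 _ _ _ h (huv ▸ he))⟩, rfl⟩⟩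
    · rintro ⟨w, ⟨rfl, rfl⟩ | ⟨hze, hw⟩, ⟨⟨hwim, hwv⟩, rfl⟩ | ⟨h5, h6, rfl⟩⟩
      · exact absurd hwim hsucc
      · exact he
      · exact hw
      · exact absurd (h6 ▸ hw) (hsucc' z)
  · have := (hβ e v).mp (h ▸ he)
    omega

/-! ### Classification of the undecomposable elements -/

theorem eq_partialId_domSet (h : ∀ ⦃x u⦄, α x = some u → u = x) : α = partialId (domSet α) := by
  funext x
  ext u
  rw [partialId_eq_some, mem_domSet]
  constructor
  · intro hx
    exact ⟨⟨u, hx⟩, (h hx).symm⟩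
  · rintro ⟨⟨v, hv⟩, rfl⟩
    rwa [h hv] at hv

theorem partialId_insert_mul_partialId_insert {D : Set ℕ} {a b : ℕ} (hab : a ≠ b) :
    partialId (insert a D) * partialId (insert b D) = partialId D := by
  funext x
  ext u
  simp only [mul_eq_some, partialId_eq_some, Set.mem_insert_iff]
  grind

theorem Undecomposable.mem_of_eq_partialId (hr : r + 1 ≤ n) (hα : α ∈ IORDr n r)
    (hU : Undecomposable (IORDr n r) α) (hid : α = partialId (domSet α)) : α ∈ EIset n r := by
  obtain ⟨h1, -, -, h4⟩ := mem_IORDr_iff.mp hα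
  refine ⟨domSet α, h1.domSet_subset, ?_, hid⟩
  by_contra hne
  have hcard := Set.ncard_sdiff_add_ncard_of_subset h1.domSet_subset (Set.finite_Icc 1 n)
  rw [← Finset.coe_Icc, Set.ncard_coe_finset, Nat.card_Icc, Finset.coe_Icc] at hcard
  obtain ⟨a, ha, b, hb, hab⟩ := (Set.one_lt_ncard_iff_nontrivial
    (s := Set.Icc 1 n \ domSet α)).mp (by omega)
  have hmem : ∀ c ∈ Set.Icc 1 n \ domSet α, partialId (insert c (domSet α)) ∈ IORDr n r := by
    intro c hc
    refine partialId_mem (Set.insert_subset hc.1 h1.domSet_subset) ?_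
    have := Set.ncard_insert_le c (domSet α)
    omega
  have hcontra : ∀ c ∈ Set.Icc 1 n \ domSet α, α ≠ partialId (insert c (domSet α)) := by
    intro c hc h
    refine hc.2 (mem_domSet.mpr ⟨c, ?_⟩)
    rw [h, partialId_eq_some]
    exact ⟨Set.mem_insert _ _, rfl⟩
  rcases hU _ (hmem a ha) _ (hmem b hb)
    ((partialId_insert_mul_partialId_insert hab).trans hid.symm).symm with h | h
  · exact hcontra a ha h
  · exact hcontra b hb h

theorem Undecomposable.mem_of_increasing (hr : r + 1 ≤ n) (hα : α ∈ IORDr n r)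
    (hU : Undecomposable (IORDr n r) α) (hid : α ≠ partialId (domSet α))
    (hinc : ∀ x y u v, α x = some u → α y = some v → x < y → u < v) : α ∈ FIset n r := by
  obtain ⟨h1, -, -, h4⟩ := mem_IORDr_iff.mp hα
  have hex : ∃ e, ∃ v, α e = some v ∧ v ≠ e := by
    by_contra h
    push Not at h
    exact hid (eq_partialId_domSet h)
  obtain ⟨v, hv, hve⟩ := Nat.find_spec hex
  have hleast := fun z => Nat.find_min (H := hex) (m := z)
  generalize Nat.find hex = e at *
  have hv' := h1 hv
  have hpred : e - 1 ∉ domSet α := by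
    intro h
    obtain ⟨u, hu⟩ := mem_domSet.mp h
    have h5 := hinc _ _ _ _ hu hv (by omega)
    have h6 := hleast (e - 1) (by omega)
    push Not at h6
    have := h6 u hu
    omega
  have hδ := hU.eq_deltaMap hα hv (by omega) hpred
  have hed : e ∈ domSet α := mem_domSet.mpr ⟨v, hv⟩
  have hcard := Set.ncard_sdiff_singleton_add_one hed h1.finite_domSet
  have hsub : domSet α \ {e} ⊆ Set.Icc 1 n \ {e - 1, e} := by
    rintro z ⟨hz, hze⟩
    refine ⟨h1.domSet_subset hz, ?_⟩
    rintro (rfl | rfl)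
    · exact hpred hz
    · exact hze rfl
  refine ⟨e, domSet α \ {e}, by omega, by omega, hsub, ?_, hδ⟩
  by_contra hne
  obtain ⟨c, hc, hcD⟩ : ∃ c ∈ Set.Icc 1 n \ {e - 1, e}, c ∉ domSet α \ {e} := by
    refine Set.exists_mem_notMem_of_ncard_lt_ncard ?_ h1.finite_domSet.sdiff
    have hpair : ({e - 1, e} : Set ℕ) ⊆ Set.Icc 1 n := by
      rintro z (rfl | rfl) <;> exact ⟨by omega, by omega⟩
    have h5 := Set.ncard_sdiff_add_ncard_of_subset hpair (Set.finite_Icc 1 n)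
    rw [← Finset.coe_Icc, Set.ncard_coe_finset, Nat.card_Icc, Finset.coe_Icc,
      Set.ncard_pair (by omega)] at h5
    omega
  have hc' : c ≠ e - 1 ∧ c ≠ e := by simpa using hc.2
  have hext := hU.eq_of_extends hα hid
    (deltaMap_mem (r := r) (a := e) (Y := insert c (domSet α \ {e})) (by omega) (by omega)
      (Set.insert_subset hc hsub) ?_) ?_
  · refine hcD ⟨mem_domSet.mpr ⟨c, ?_⟩, hc'.2⟩
    rw [hext, deltaMap_eq_fixExcept, fixExcept_eq_some]
    exact Or.inl ⟨Set.mem_insert _ _, rfl⟩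
  · have := Set.ncard_insert_le c (domSet α \ {e})
    omega
  · intro x y hxy
    rw [hδ, deltaMap_eq_fixExcept, fixExcept_eq_some] at hxy
    rw [deltaMap_eq_fixExcept, fixExcept_eq_some]
    simp only [Set.mem_insert_iff]
    grind

/-- An undecomposable element which is not increasing is tight on both sides: every moved point
has its predecessor in the domain and the successor of its value in the image. -/
theorem Undecomposable.tight (hα : α ∈ IORDr n r) (hU : Undecomposable (IORDr n r) α)
    (hinc : ¬ ∀ x y u v, α x = some u → α y = some v → x < y → u < v) {e v : ℕ}
    (he : α e = some v) (hve : v ≠ e) :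
    (∃ u, α (e - 1) = some u) ∧ ∃ z, α z = some (v + 1) := by
  obtain ⟨h1, -, -, h4⟩ := mem_IORDr_iff.mp hα
  have hv := h1 he
  constructor
  · by_contra hpred
    rw [← mem_domSet] at hpred
    have hδ := hU.eq_deltaMap hα he (by omega) hpred
    refine hinc fun x y u w hx hy hxy => ?_
    have key : ∀ z t, α z = some t → z ≠ e - 1 ∧ t = if z = e then e - 1 else z := by
      intro z t hz
      refine ⟨fun h => hpred (mem_domSet.mpr ⟨t, h ▸ hz⟩), ?_⟩
      rw [hδ, deltaMap_eq_fixExcept, fixExcept_eq_some] at hz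
      rcases hz with ⟨⟨-, hze⟩, rfl⟩ | ⟨-, rfl, rfl⟩
      · exact (if_neg hze).symm
      · rw [if_pos rfl]
    have h5 := key _ _ hx
    have h6 := key _ _ hy
    rw [h5.2, h6.2]
    split_ifs <;> omega
  · by_contra hsucc
    exact hinc fun x y u w hx hy hxy =>
      hU.increasing_of_succ_notMem hα he (by omega) hsucc hx hy hxy

theorem exists_min_max_domSet (h1 : DecrOn n α) (hne : (domSet α).Nonempty) :
    ∃ b ∈ domSet α, ∃ e ∈ domSet α, ∀ z ∈ domSet α, b ≤ z ∧ z ≤ e := by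
  have hbdd : BddAbove (domSet α) := ⟨n, fun z hz => (h1.domSet_subset hz).2⟩
  exact ⟨_, Nat.sInf_mem hne, _, Nat.sSup_mem hne hbdd,
    fun z hz => ⟨Nat.sInf_le hz, le_csSup hbdd hz⟩⟩

theorem Undecomposable.min_fixed (hα : α ∈ IORDr n r) (hU : Undecomposable (IORDr n r) α)
    (hinc : ¬ ∀ x y u v, α x = some u → α y = some v → x < y → u < v) {b : ℕ}
    (hb : b ∈ domSet α) (hmin : ∀ z u, α z = some u → b ≤ z) : α b = some b := by
  obtain ⟨u, hu⟩ := mem_domSet.mp hb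
  by_cases hub : u = b
  · rwa [hub] at hu
  · obtain ⟨⟨w, hw⟩, -⟩ := hU.tight hα hinc hu hub
    have := hmin _ _ hw
    have := (mem_IORDr_iff.mp hα).1 hu
    omega

theorem Undecomposable.mem_of_cycPres (hα : α ∈ IORDr n r)
    (hU : Undecomposable (IORDr n r) α) (hpres : CycPres α)
    (hinc : ¬ ∀ x y u v, α x = some u → α y = some v → x < y → u < v) :
    α ∈ GIset n r ∪ ⋃ k ∈ Set.Icc 2 (r - 1), GIcset n k := by
  obtain ⟨h1, h2, -, h4⟩ := mem_IORDr_iff.mp hα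
  have hne : (domSet α).Nonempty := by
    by_contra h
    exact hinc fun x y u v hx _ _ => absurd ⟨x, mem_domSet.mpr ⟨u, hx⟩⟩ h
  obtain ⟨b, hb, e, he, hbe⟩ := exists_min_max_domSet h1 hne
  have hmin : ∀ z u, α z = some u → b ≤ z := fun z u h => (hbe z (mem_domSet.mpr ⟨u, h⟩)).1
  have hmax : ∀ z u, α z = some u → z ≤ e := fun z u h => (hbe z (mem_domSet.mpr ⟨u, h⟩)).2
  have hbfix := hU.min_fixed hα hinc hb hmin
  have hfix : ∀ z u, α z = some u → b ≤ u → u = z := by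
    intro z
    induction z using Nat.strong_induction_on with
    | _ z ih =>
      intro u hz hbu
      by_contra huz
      obtain ⟨⟨w, hw⟩, -⟩ := hU.tight hα hinc hz huz
      have h5 := h1 hz
      have h6 := hmin _ _ hw
      have h7 := h1 hw
      rcases h6.eq_or_lt with h6 | h6
      · have : z = b := h2 _ _ b (by rw [hz]; congr; omega) hbfix
        omega
      · have h8 := hpres hbfix hw hz h6 (by omega)
        have h9 := ih (z - 1) (by omega) w hw
        unfold Cyc at h8
        omega
  obtain ⟨v, hv⟩ := mem_domSet.mp he
  have hvb : v < b := by
    by_contra hvb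
    have hve := hfix e v hv (by omega)
    refine hinc fun x y u w hx hy hxy => ?_
    have key : ∀ z t, α z = some t → t = z := by
      intro z t hz
      refine hfix z t hz ?_
      have h5 := hmin _ _ hz
      have h6 := hmax _ _ hz
      rcases h5.eq_or_lt with rfl | h5
      · rw [hz] at hbfix
        exact (Option.some.inj hbfix).ge
      · rcases h6.eq_or_lt with rfl | h6
        · rw [hz] at hv
          have := Option.some.inj hv
          omega
        · have := hpres hbfix hz hv h5 h6
          unfold Cyc at this
          omega
    rw [key _ _ hx, key _ _ hy]
    exact hxy
  have hfold := hU.eq_fixExcept_of_lt_min hα (fun z hz => (hbe z hz).1) (fun z hz => (hbe z hz).2)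
    hv hvb
  have hvb' : v = b - 1 := by
    have h5 := hv
    rw [hfold, fixExcept_eq_some] at h5
    rcases h5 with ⟨⟨-, h5⟩, -⟩ | ⟨-, -, h5⟩
    · exact absurd rfl h5
    · exact h5.symm
  have hv1 := h1 hv
  have hbe' : b < e := by
    have := h1 hbfix
    have := (hbe b hb).2
    have : b ≠ e := by
      rintro rfl
      rw [hbfix] at hv
      have := Option.some.inj hv
      omega
    omega
  obtain ⟨⟨w, hw⟩, -⟩ := hU.tight hα hinc hv (by omega)
  have hZne : b ∈ domSet α \ {e} := ⟨hb, hbe'.ne⟩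
  have hZe : e - 1 ∈ domSet α \ {e} := ⟨mem_domSet.mpr ⟨w, hw⟩, by simp; omega⟩
  have hZlt : ∀ z ∈ domSet α \ {e}, b ≤ z ∧ z ≤ e - 1 := fun z hz => by
    have h5 := hbe z hz.1
    have h6 : z ≠ e := hz.2
    omega
  have hsup : sSup (domSet α \ {e}) = e - 1 :=
    IsGreatest.csSup_eq ⟨hZe, fun z hz => (hZlt z hz).2⟩
  have hinf : sInf (domSet α \ {e}) = b := IsLeast.csInf_eq ⟨hZne, fun z hz => (hZlt z hz).1⟩
  have hzeta : ∀ Z : Set ℕ, sSup Z = e - 1 → sInf Z = b → zetaMap Z = fixExcept Z e (b - 1) := by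
    intro Z h5 h6
    funext x
    simp only [zetaMap, fixExcept, h5, h6, Nat.sub_add_cancel (show 1 ≤ e by omega)]
  have hαzeta : α = zetaMap (domSet α \ {e}) := by
    rw [hzeta _ hsup hinf]
    exact hfold
  have hsub : ∀ Z : Set ℕ, (∀ z ∈ Z, b ≤ z ∧ z ≤ e - 1) → Z ⊆ Set.Icc 1 n \ {1, n} := by
    intro Z hZ z hz
    have h5 := hZ z hz
    refine ⟨⟨by omega, by omega⟩, ?_⟩
    rintro (h | h)
    · omega
    · rw [Set.mem_singleton_iff] at h
      omega
  have hcard := Set.ncard_sdiff_singleton_add_one he h1.finite_domSet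
  have hpos : 0 < (domSet α \ {e}).ncard :=
    (Set.ncard_pos h1.finite_domSet.sdiff).mpr ⟨b, hZne⟩
  by_cases hcr : (domSet α).ncard = r
  · exact Or.inl ⟨_, hsub _ hZlt, by omega, hαzeta⟩
  · refine Or.inr (Set.mem_biUnion (x := (domSet α).ncard) ⟨by omega, by omega⟩
      ⟨_, hsub _ hZlt, by omega, ⟨?_⟩, hαzeta⟩)
    intro x hx y hy c hc
    by_contra hcZ
    have h5 := hZlt x hx
    have h6 := hZlt y hy
    have h7 := hc.1
    have h8 := hc.2
    have hZ'lt : ∀ z ∈ insert c (domSet α \ {e}), b ≤ z ∧ z ≤ e - 1 := by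
      rintro z (rfl | hz)
      · omega
      · exact hZlt z hz
    have hext := hU.eq_of_extends hα ?_ (zetaMap_mem (r := r) (hsub _ hZ'lt)
      ⟨c, Set.mem_insert _ _⟩ ?_) ?_
    · refine hcZ ⟨mem_domSet.mpr ⟨c, ?_⟩, by simp; omega⟩
      rw [hext]
      simp [zetaMap]
    · intro hid
      rw [hid, partialId_eq_some] at hv
      omega
    · have := Set.ncard_insert_le c (domSet α \ {e})
      omega
    · intro z u hzu
      rw [hzeta _ (IsGreatest.csSup_eq ⟨Set.mem_insert_of_mem _ hZe, fun z hz => (hZ'lt z hz).2⟩)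
        (IsLeast.csInf_eq ⟨Set.mem_insert_of_mem _ hZne, fun z hz => (hZ'lt z hz).1⟩),
        fixExcept_eq_some]
      rw [hfold, fixExcept_eq_some] at hzu
      simp only [Set.mem_insert_iff]
      grind

theorem Undecomposable.mem_of_cycRev (hr : n - n / 3 ≤ r) (hα : α ∈ IORDr n r)
    (hU : Undecomposable (IORDr n r) α) (hrev : CycRev α) (hpres : ¬ CycPres α) :
    α ∈ Gset n := by
  obtain ⟨h1, h2, -, h4⟩ := mem_IORDr_iff.mp hα
  have hinc : ¬ ∀ x y u v, α x = some u → α y = some v → x < y → u < v :=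
    fun h => hpres (cycPres_of_increasing h)
  have hne : (domSet α).Nonempty := by
    by_contra h
    exact hinc fun x y u v hx _ _ => absurd ⟨x, mem_domSet.mpr ⟨u, hx⟩⟩ h
  obtain ⟨p, hp, e, he, hpe⟩ := exists_min_max_domSet h1 hne
  have hmin : ∀ z u, α z = some u → p ≤ z := fun z u h => (hpe z (mem_domSet.mpr ⟨u, h⟩)).1
  have hpfix := hU.min_fixed hα hinc hp hmin
  have heqp : ∀ z, α z = some p → z = p := fun z h => h2 _ _ _ h hpfix
  have hlow : ∀ z u w t, α z = some u → u ≤ p → p < w → w < z → α w = some t → u < t ∧ t < p := by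
    intro z u w t hz hup hpw hwz hw
    have := hrev hpfix hw hz hpw hwz
    unfold Cyc at this
    omega
  have hhigh : ∀ z u w t, α z = some u → p < u → p < w → w < z → α w = some t → p < t → u < t := by
    intro z u w t hz hup hpw hwz hw hpt
    have := hrev hpfix hw hz hpw hwz
    unfold Cyc at this
    omega
  have hlow_eq : ∀ z u, α z = some u → u ≤ p → u + z = 2 * p := by
    intro z
    induction z using Nat.strong_induction_on with
    | _ z ih =>
      intro u hz hup
      have hpz := hmin _ _ hz
      have hz1 := h1 hz
      rcases hpz.eq_or_lt with rfl | hpz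
      · rw [hz] at hpfix
        have := Option.some.inj hpfix
        omega
      have hup' : u < p := lt_of_le_of_ne hup (by rintro rfl; have := heqp z hz; omega)
      obtain ⟨⟨t, ht⟩, w, hw⟩ := hU.tight hα hinc hz (by omega)
      have hpw := hmin _ _ hw
      have ht1 := hmin _ _ ht
      have hwz : w = z - 1 := by
        have hwne : w ≠ z := by
          rintro rfl
          rw [hz] at hw
          have := Option.some.inj hw
          omega
        have h5 : ¬ z < w := fun h => by
          have := hlow w (u + 1) z u hw (by omega) hpz h hz
          omega
        by_contra h6
        have h7 := hlow z u (z - 1) t hz hup (by omega) (by omega) ht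
        rcases hpw.eq_or_lt with rfl | hpw
        · rw [hpfix] at hw
          have := Option.some.inj hw
          omega
        · have := hlow (z - 1) t w (u + 1) ht (by omega) hpw (by omega) hw
          omega
      subst hwz
      have := ih (z - 1) (by omega) (u + 1) hw (by omega)
      omega
  obtain ⟨v, hv⟩ := mem_domSet.mp he
  have hex : ∃ q, ∃ u, α q = some u ∧ p < u := by
    by_contra hcon
    push Not at hcon
    have hvp := hcon e v hv
    have h5 := hlow_eq e v hv hvp
    have h6 := hmin _ _ hv
    rcases h6.eq_or_lt with rfl | h6
    · refine hinc fun x y u w hx hy hxy => ?_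
      have := hmin _ _ hx
      have := (hpe y (mem_domSet.mpr ⟨w, hy⟩)).2
      omega
    · have hfold := hU.eq_fixExcept_of_lt_min hα (fun z hz => (hpe z hz).1)
        (fun z hz => (hpe z hz).2) hv (by omega)
      refine hpres ?_
      rw [hfold]
      refine cycPres_fixExcept_of_lt (fun z hz => ?_) fun z hz =>
        lt_of_le_of_ne (hpe z hz.1).2 hz.2
      have := (hpe z hz.1).1
      have := h1 hpfix
      omega
  obtain ⟨s, hs, hps⟩ := Nat.find_spec hex
  have hleast : ∀ z u, α z = some u → p < u → Nat.find hex ≤ z := fun z u hz hu =>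
    Nat.find_min' hex ⟨u, hz, hu⟩
  generalize Nat.find hex = q at *
  have hs1 := h1 hs
  have hqfix : s = q := by
    by_contra hsq
    obtain ⟨-, w, hw⟩ := hU.tight hα hinc hs hsq
    have h5 := hleast _ _ hw (by omega)
    rcases h5.eq_or_lt with rfl | h5
    · rw [hs] at hw
      have := Option.some.inj hw
      omega
    · have := hhigh w (s + 1) q s hw (by omega) (by omega) h5 hs hps
      omega
  subst hqfix
  have hlow_lt : ∀ z u, α z = some u → u ≤ p → z < s := by
    intro z u hz hup
    by_contra hsz
    rcases (not_lt.mp hsz).eq_or_lt with rfl | hsz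
    · rw [hs] at hz
      have := Option.some.inj hz
      omega
    · have := hlow z u s s hz hup (by omega) hsz hs
      omega
  have hhigh_eq : ∀ z u, α z = some u → p < u → u + z = 2 * s := by
    intro z
    induction z using Nat.strong_induction_on with
    | _ z ih =>
      intro u hz hpu
      have hsz := hleast _ _ hz hpu
      rcases hsz.eq_or_lt with rfl | hsz
      · rw [hz] at hs
        have := Option.some.inj hs
        omega
      have hus := hhigh z u s s hz hpu (by omega) hsz hs hps
      obtain ⟨⟨t, ht⟩, w, hw⟩ := hU.tight hα hinc hz (by omega)
      have hpt : p < t := by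
        by_contra h
        have := hlow_lt _ _ ht (by omega)
        omega
      have hsw := hleast _ _ hw (by omega)
      have hwz : w = z - 1 := by
        have hwne : w ≠ z := by
          rintro rfl
          rw [hz] at hw
          have := Option.some.inj hw
          omega
        have h5 : ¬ z < w := fun h => by
          have := hhigh w (u + 1) z u hw (by omega) (by omega) h hz hpu
          omega
        by_contra h6
        have h7 := hhigh z u (z - 1) t hz hpu (by omega) (by omega) ht hpt
        have := hhigh (z - 1) t w (u + 1) ht hpt (by omega) (by omega) hw (by omega)
        omega
      subst hwz
      have := ih (z - 1) (by omega) (u + 1) hw (by omega)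
      omega
  have hps2 : p + 2 ≤ s := by
    by_contra hcon
    refine hpres ?_
    have key : ∀ z u, α z = some u → z = p ∨ z = s := by
      intro z u hz
      have h5 := hmin _ _ hz
      by_cases hup : u ≤ p
      · have := hlow_lt _ _ hz hup
        omega
      · have := hhigh_eq _ _ hz (by omega)
        have := hleast _ _ hz (by omega)
        omega
    intro x y z u v w hx hy hz hxy hyz
    have := key _ _ hx
    have := key _ _ hy
    have := key _ _ hz
    omega
  have hp1 := h1 hpfix
  have hext := hU.eq_of_extends hα ?_ (gamma_mem hr hp1.1 hps2 hs1.2.2) ?_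
  · refine ⟨⟨p, s, hp1.1, hps2, hs1.2.2, hext⟩, fun h => hpres ?_⟩
    rw [Set.mem_singleton_iff.mp h]
    intro x y z u v w hx hy hz hxy hyz
    rw [gamma_eq_some (by omega)] at hx hy hz
    omega
  · intro hid
    refine hinc fun x y u w hx hy hxy => ?_
    rw [hid, partialId_eq_some] at hx hy
    omega
  · intro z u hz
    rw [gamma_eq_some (by omega)]
    have hz1 := h1 hz
    have := hmin _ _ hz
    by_cases hup : u ≤ p
    · have := hlow_lt _ _ hz hup
      have := hlow_eq _ _ hz hup
      omega
    · have := hhigh_eq _ _ hz (by omega)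
      have := hleast _ _ hz (by omega)
      omega

/-- Every undecomposable element of `IORD(n,r)` is one of the distinguished maps. -/
theorem Undecomposable.mem (hr : r + 1 ≤ n) (hr' : n - n / 3 ≤ r) (hα : α ∈ IORDr n r)
    (hU : Undecomposable (IORDr n r) α) :
    α ∈ EIset n r ∪ FIset n r ∪ GIset n r ∪ (⋃ k ∈ Set.Icc 2 (r - 1), GIcset n k) ∪ Gset n := by
  by_cases hid : α = partialId (domSet α)
  · exact Or.inl (Or.inl (Or.inl (Or.inl (hU.mem_of_eq_partialId hr hα hid))))
  by_cases hinc : ∀ x y u v, α x = some u → α y = some v → x < y → u < v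
  · exact Or.inl (Or.inl (Or.inl (Or.inr (hU.mem_of_increasing hr hα hid hinc))))
  by_cases hpres : CycPres α
  · rcases hU.mem_of_cycPres hα hpres hinc with h | h
    · exact Or.inl (Or.inl (Or.inr h))
    · exact Or.inl (Or.inr h)
  · exact Or.inr (hU.mem_of_cycRev hr' hα
      ((mem_IORDr_iff.mp hα).2.2.1.resolve_left hpres) hpres)

theorem mem_IORDr_of_mem_generators (hr : 2 ≤ r) (hr' : n - n / 3 ≤ r)
    (hα : α ∈ EIset n r ∪ FIset n r ∪ GIset n r ∪
      (⋃ k ∈ Set.Icc 2 (r - 1), GIcset n k) ∪ Gset n) : α ∈ IORDr n r := by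
  rcases hα with (((⟨Y, hY, hc, rfl⟩ | ⟨a, Y, ha, han, hY, hc, rfl⟩) | ⟨Z, hZ, hc, rfl⟩) | h) |
    ⟨⟨p, q, hp, hpq, hq, rfl⟩, -⟩
  · exact partialId_mem hY hc.le
  · exact deltaMap_mem ha han hY (by omega)
  · exact zetaMap_mem hZ (Set.nonempty_of_ncard_ne_zero (by omega)) (by omega)
  · obtain ⟨k, ⟨hk2, hkr⟩, Z, hZ, hc, -, rfl⟩ := Set.mem_iUnion₂.mp h
    exact zetaMap_mem hZ (Set.nonempty_of_ncard_ne_zero (by omega)) (by omega)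
  · exact gamma_mem hr' hp hpq hq

theorem isMaximalSubsemigroup_sdiff_singleton {T : Set PTrans} (hα : α ∈ T)
    (hS : IsSubsemigroupOf (T \ {α}) T) : IsMaximalSubsemigroup T (T \ {α}) := by
  refine ⟨hS, fun h => ?_, fun U hU hne hsub => hsub.antisymm fun x hx => ⟨hU.1 hx, ?_⟩⟩
  · rw [← h] at hα
    exact hα.2 rfl
  · rintro rfl
    refine hne (hU.1.antisymm fun y hy => ?_)
    by_cases hyx : y = x
    · rwa [hyx]
    · exact hsub ⟨hy, hyx⟩

end OrientedPT

open OrientedPT in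
/-- For `n ≥ 4` and `n − ⌊n/3⌋ ≤ r ≤ n−1`, a subsemigroup `S`
of `IORD(n,r)` is maximal iff `S = IORD(n,r) \ {α}` for some
`α ∈ EI_r ∪ FI_r ∪ GI_r ∪ (⋃_{k=2}^{r−1} GI_k^c) ∪ G_n`. -/
theorem maximal_subsemigroups_IORDr (n r : ℕ) (hn : 4 ≤ n)
    (hr1 : n - n / 3 ≤ r) (hr2 : r ≤ n - 1) (S : Set PTrans)
    (hS : IsSubsemigroupOf S (IORDr n r)) :
    IsMaximalSubsemigroup (IORDr n r) S ↔
      ∃ α ∈ EIset n r ∪ FIset n r ∪ GIset n r ∪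
          (⋃ k ∈ Set.Icc 2 (r - 1), GIcset n k) ∪ Gset n,
        S = IORDr n r \ {α} := by
  constructor
  · intro h
    obtain ⟨α, hα, hU, rfl⟩ := exists_undecomposable_of_isMaximalSubsemigroup h
    exact ⟨α, hU.mem (by omega) hr1 hα, rfl⟩
  · rintro ⟨α, hα, rfl⟩
    exact isMaximalSubsemigroup_sdiff_singleton
      (mem_IORDr_of_mem_generators (by omega) hr1 hα) hS
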